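/- arXiv:1804.09683 — 10 statements merged into one kernel-verified Lean document; each statement's English description precedes it below -/
import Mathlib

section
/- Let A be a positive semidefinite matrix in M_n(ℂ) and let c : Fin n → Fin k induce a partition of the index set, with pinching map Φ_c. Then Φ_c(P_A) ≤ P_{Φ_c(A)} in the Loewner order, where P_A denotes the range projection of A and P_{Φ_c(A)} the range projection of Φ_c(A); i.e., P_{Φ_c(A)} − Φ_c(P_A) is positive semidefinite. -/
/-!
Write `E l` for the coordinate projection onto the block `{i | c i = l}`, so that
`pinch c M = ∑ l, E l * M * E l`; in particular pinching preserves positive semidefiniteness.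
Put `R = 1 - Q`. Since `pinch c A * R = 0`, the positive semidefinite matrices
`(E l * R)ᴴ * A * (E l * R)` sum to zero, so each vanishes and `A * E l * R = 0`.
As `P` has the same kernel as the Hermitian matrix `A`, also `P * E l * R = 0` for all `l`, whence
`pinch c P * R = 0`, i.e. `pinch c P = Q * pinch c P * Q`. Therefore
`Q - pinch c P = Q * (1 - pinch c P) * Q = Q * pinch c (1 - P) * Q`, which is positive
semidefinite because the projection `1 - P` is.
-/

open scoped ComplexOrder

/-- The pinching map determined by `c : Fin n → Fin k`: zeroes out all entries `(i, j)`
with `c i ≠ c j`, keeping only the diagonal blocks of the block decomposition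
determined by `c`. -/
def pinch {n k : ℕ} (c : Fin n → Fin k) (A : Matrix (Fin n) (Fin n) ℂ) :
    Matrix (Fin n) (Fin n) ℂ :=
  Matrix.of fun i j => if c i = c j then A i j else 0

/-- `P` is the range projection of `A`: the (unique) Hermitian idempotent matrix whose
column space (range as a linear map) equals the column space of `A`. -/
def IsRangeProj {n : ℕ} (A P : Matrix (Fin n) (Fin n) ℂ) : Prop :=
  P.IsHermitian ∧ P * P = P ∧
    LinearMap.range P.mulVecLin = LinearMap.range A.mulVecLin

namespace PinchAux

open Matrix

variable {n k : ℕ}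

/-- The diagonal projection onto the coordinates `i` with `c i = l`. -/
def blockProj (c : Fin n → Fin k) (l : Fin k) : Matrix (Fin n) (Fin n) ℂ :=
  diagonal fun i => if c i = l then 1 else 0

lemma blockProj_conjTranspose (c : Fin n → Fin k) (l : Fin k) :
    (blockProj c l)ᴴ = blockProj c l := by
  rw [blockProj, diagonal_conjTranspose]
  congr 1
  funext i
  by_cases h : c i = l <;> simp [h]

lemma pinch_eq_sum (c : Fin n → Fin k) (M : Matrix (Fin n) (Fin n) ℂ) :
    pinch c M = ∑ l, blockProj c l * M * blockProj c l := by
  ext i j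
  simp [pinch, blockProj, Matrix.sum_apply, diagonal_mul, mul_diagonal, eq_comm]

lemma pinch_posSemidef (c : Fin n → Fin k) {M : Matrix (Fin n) (Fin n) ℂ}
    (hM : M.PosSemidef) : (pinch c M).PosSemidef := by
  rw [pinch_eq_sum]
  refine posSemidef_sum _ fun l _ => ?_
  have h := hM.conjTranspose_mul_mul_same (blockProj c l)
  rwa [blockProj_conjTranspose] at h

lemma pinch_one_sub (c : Fin n → Fin k) (M : Matrix (Fin n) (Fin n) ℂ) :
    pinch c (1 - M) = 1 - pinch c M := by
  ext i j
  by_cases h : i = j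
  · subst h; simp [pinch]
  · by_cases h' : c i = c j <;> simp [pinch, h, h']

lemma exists_eq_mul_of_range_le {M N : Matrix (Fin n) (Fin n) ℂ}
    (h : LinearMap.range M.mulVecLin ≤ LinearMap.range N.mulVecLin) :
    ∃ X : Matrix (Fin n) (Fin n) ℂ, M = N * X := by
  have hcol : ∀ j, ∃ x, N *ᵥ x = M.col j := fun j => by
    obtain ⟨x, hx⟩ := h ⟨Pi.single j 1, rfl⟩
    exact ⟨x, by simpa using hx⟩
  choose x hx using hcol
  refine ⟨(of x)ᵀ, ?_⟩
  ext i j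
  exact (congrFun (hx j) i).symm

/-- If the pinching of a positive semidefinite matrix `A` annihilates `R`, then
`A` itself annihilates the part of `R` in each block. -/
lemma mul_blockProj_mul_eq_zero (c : Fin n → Fin k) {A R : Matrix (Fin n) (Fin n) ℂ}
    (hA : A.PosSemidef) (h : pinch c A * R = 0) (l : Fin k) :
    A * (blockProj c l * R) = 0 := by
  open scoped MatrixOrder in
  have hsum : ∑ m, (blockProj c m * R)ᴴ * A * (blockProj c m * R) = 0 := by
    calc _ = Rᴴ * (pinch c A * R) := by
          rw [pinch_eq_sum, Finset.sum_mul, Finset.mul_sum]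
          refine Finset.sum_congr rfl fun m _ => ?_
          simp only [conjTranspose_mul, blockProj_conjTranspose, Matrix.mul_assoc]
      _ = 0 := by rw [h, Matrix.mul_zero]
  open scoped MatrixOrder in
  have hz := (Finset.sum_eq_zero_iff_of_nonneg fun m _ =>
    (hA.conjTranspose_mul_mul_same (blockProj c m * R)).nonneg).1 hsum l (Finset.mem_univ l)
  open scoped MatrixOrder in
  obtain ⟨B, rfl⟩ := CStarAlgebra.nonneg_iff_eq_star_mul_self.mp hA.nonneg
  rw [star_eq_conjTranspose] at hz ⊢
  have hB : B * (blockProj c l * R) = 0 := by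
    rw [← conjTranspose_mul_self_eq_zero, conjTranspose_mul]
    simpa only [Matrix.mul_assoc] using hz
  rw [Matrix.mul_assoc, hB, Matrix.mul_zero]

end PinchAux

open PinchAux Matrix in
/-- For a positive semidefinite `A`, the pinching of the range projection of `A` is
dominated, in the Loewner order, by the range projection of the pinching of `A`. -/
theorem pinch_rangeProj_le {n k : ℕ} (c : Fin n → Fin k)
    (A : Matrix (Fin n) (Fin n) ℂ) (hA : A.PosSemidef)
    (P : Matrix (Fin n) (Fin n) ℂ) (hP : IsRangeProj A P)
    (Q : Matrix (Fin n) (Fin n) ℂ) (hQ : IsRangeProj (pinch c A) Q) :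
    (Q - pinch c P).PosSemidef := by
  obtain ⟨hPh, hPP, hPr⟩ := hP
  obtain ⟨hQh, hQQ, hQr⟩ := hQ
  have hcompl : (1 - P).PosSemidef := by
    have h := posSemidef_conjTranspose_mul_self (1 - P)
    have e : (1 - P)ᴴ * (1 - P) = 1 - P := by
      rw [conjTranspose_sub, conjTranspose_one, hPh.eq]
      simp [Matrix.mul_sub, Matrix.sub_mul, hPP]
    rwa [e] at h
  have hPpsd : P.PosSemidef := by
    have h := posSemidef_conjTranspose_mul_self P
    rwa [hPh.eq, hPP] at h
  have hPP' := (pinch_posSemidef c hPpsd).isHermitian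
  have hAR : pinch c A * (1 - Q) = 0 := by
    obtain ⟨Y, hY⟩ := exists_eq_mul_of_range_le hQr.ge
    have h1 : Q * pinch c A = pinch c A := by
      rw [hY, ← Matrix.mul_assoc, hQQ]
    have h2 := congrArg conjTranspose h1
    rw [conjTranspose_mul, hQh.eq, (pinch_posSemidef c hA).isHermitian.eq] at h2
    rw [Matrix.mul_sub, Matrix.mul_one, h2, sub_self]
  obtain ⟨X, hX⟩ := exists_eq_mul_of_range_le hPr.le
  -- The adjoint of `P = A * X` shows that `P` vanishes wherever `A` does.
  have hX' : P = Xᴴ * A := by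
    have h := congrArg conjTranspose hX
    rwa [conjTranspose_mul, hPh.eq, hA.isHermitian.eq] at h
  have hPR : pinch c P * (1 - Q) = 0 := by
    rw [pinch_eq_sum, Finset.sum_mul]
    refine Finset.sum_eq_zero fun l _ => ?_
    have h : P * (blockProj c l * (1 - Q)) = 0 := by
      rw [hX', Matrix.mul_assoc, mul_blockProj_mul_eq_zero c hA hAR l, Matrix.mul_zero]
    rw [Matrix.mul_assoc, Matrix.mul_assoc, h, Matrix.mul_zero]
  have hPQ : pinch c P * Q = pinch c P := by
    rw [Matrix.mul_sub, Matrix.mul_one, sub_eq_zero] at hPR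
    exact hPR.symm
  have hQP : Q * pinch c P = pinch c P := by
    have h := congrArg conjTranspose hPQ
    rwa [conjTranspose_mul, hQh.eq, hPP'.eq] at h
  have h := (pinch_posSemidef c hcompl).conjTranspose_mul_mul_same Q
  rwa [pinch_one_sub, hQh.eq, Matrix.mul_sub, Matrix.sub_mul, Matrix.mul_one, hQQ, hQP, hPQ] at h
end

section
/- Let A be a positive semidefinite matrix in M_n(ℂ) and let c : Fin n → Fin k induce a partition of the index set, with pinching map Φ_c. Then Φ_c(P_A) = P_{Φ_c(A)} if and only if Φ_c(P_A) = P_A (i.e., if and only if the range projection of A is block diagonal with respect to the partition determined by c), where P_A and P_{Φ_c(A)} denote the range projections of A and Φ_c(A) respectively. -/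
/-!
If `Φ(P)` is idempotent, comparing the diagonal entries of `Φ(P)² = Φ(P)` and `P² = P` gives
`∑_{c j = c i} |P i j|² = P i i = ∑_j |P i j|²`, so the off-block entries of `P` vanish
(`pinch_eq_self_of_idempotent`).

Conversely, for `A ≥ 0` the kernel of `Φ(A)` is contained in that of `A`, because the quadratic
form of `Φ(A)` at `x` is the sum of the nonnegative values of the form of `A` at the block
components of `x` (`mulVec_eq_zero_of_pinch`); this gives `P = P Q`. If `P` is block diagonal, then
`P Φ(A) = Φ(P A) = Φ(A)`, whence `P Q = Q`, and so `P = Q`.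
-/

open scoped ComplexOrder

open Matrix

lemma exists_mul_of_range_le {n : ℕ} {M N : Matrix (Fin n) (Fin n) ℂ}
    (h : LinearMap.range M.mulVecLin ≤ LinearMap.range N.mulVecLin) : ∃ C, M = N * C := by
  have h1 : ∀ j, ∃ y, N *ᵥ y = M.col j := fun j => by
    have := h (LinearMap.mem_range_self M.mulVecLin (Pi.single j 1))
    simpa using this
  choose y hy using h1
  refine ⟨Matrix.of fun i j => y j i, ?_⟩
  ext i j
  have := congrFun (hy j) i
  simpa [Matrix.mul_apply, mulVec, dotProduct] using this.symm

lemma IsRangeProj.mul_eq {n : ℕ} {A P : Matrix (Fin n) (Fin n) ℂ} (h : IsRangeProj A P) :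
    P * A = A := by
  obtain ⟨C, hC⟩ := exists_mul_of_range_le h.2.2.ge
  rw [hC, ← mul_assoc, h.2.1]

lemma pinch_isHermitian {n k : ℕ} (c : Fin n → Fin k) {A : Matrix (Fin n) (Fin n) ℂ}
    (hA : A.IsHermitian) : (pinch c A).IsHermitian := by
  ext i j
  have := hA.apply i j
  by_cases h : c i = c j
  · simpa [pinch, h] using this
  · simp [pinch, h, Ne.symm h]

/-- The pinching is a module map over block diagonal matrices. -/
lemma mul_pinch {n k : ℕ} (c : Fin n → Fin k) {P : Matrix (Fin n) (Fin n) ℂ}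
    (hP : pinch c P = P) (A : Matrix (Fin n) (Fin n) ℂ) :
    P * pinch c A = pinch c (P * A) := by
  have h0 : ∀ i j, c i ≠ c j → P i j = 0 := fun i j hij => by
    rw [← hP]; simp [pinch, hij]
  ext i j
  simp only [pinch, Matrix.mul_apply, Matrix.of_apply]
  rw [show (if c i = c j then ∑ l, P i l * A l j else 0)
      = ∑ l, if c i = c j then P i l * A l j else 0 by split_ifs <;> simp]
  refine Finset.sum_congr rfl fun l _ => ?_
  by_cases h : c i = c l
  · simp [h]
  · simp [h0 i l h]

lemma pinch_eq_self_of_idempotent {n k : ℕ} (c : Fin n → Fin k) {P : Matrix (Fin n) (Fin n) ℂ}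
    (hH : P.IsHermitian) (hI : P * P = P) (h : pinch c P * pinch c P = pinch c P) :
    pinch c P = P := by
  have key : ∀ i j, c i ≠ c j → P i j = 0 := by
    intro i j hij
    have e1 := congrFun (congrFun hI i) i
    have e2 := congrFun (congrFun h i) i
    simp only [pinch, Matrix.mul_apply, Matrix.of_apply, if_true] at e1 e2
    have hn : ∀ l, P i l * P l i = ((Complex.normSq (P i l) : ℝ) : ℂ) := fun l => by
      rw [← hH.apply l i, ← Complex.mul_conj]; rfl
    have e3 : ∑ l, (if c i = c l then 0 else Complex.normSq (P i l)) = 0 := by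
      have : ∑ l, (if c i = c l then 0 else P i l * P l i) = 0 := by
        refine Eq.trans ?_ (sub_eq_zero.2 (e1.trans e2.symm))
        rw [← Finset.sum_sub_distrib]
        refine Finset.sum_congr rfl fun l _ => ?_
        by_cases hl : c i = c l
        · simp [hl]
        · simp [hl]
      simp only [hn] at this
      apply Complex.ofReal_injective
      simpa [apply_ite Complex.ofReal] using this
    rw [Finset.sum_eq_zero_iff_of_nonneg] at e3
    · simpa [hij] using e3 j (Finset.mem_univ j)
    · intro l _
      split_ifs
      · exact le_rfl
      · exact Complex.normSq_nonneg _
  ext i j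
  by_cases hij : c i = c j
  · simp [pinch, hij]
  · simp [pinch, hij, key i j hij]

lemma mulVec_eq_zero_of_pinch {n k : ℕ} (c : Fin n → Fin k) {A : Matrix (Fin n) (Fin n) ℂ}
    (hA : A.PosSemidef) (x : Fin n → ℂ) (hx : pinch c A *ᵥ x = 0) : A *ᵥ x = 0 := by
  -- `y b` is the component of `x` in block `b`.
  let y : Fin k → Fin n → ℂ := fun b i => if c i = b then x i else 0
  have hy : x = ∑ b, y b := by
    ext i; simp [y, Finset.sum_apply]
  have hq : ∑ b, star (y b) ⬝ᵥ (A *ᵥ y b) = star x ⬝ᵥ (pinch c A *ᵥ x) := by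
    simp only [dotProduct, mulVec, Finset.mul_sum, Pi.star_apply]
    rw [Finset.sum_comm]
    refine Finset.sum_congr rfl fun i _ => ?_
    rw [Finset.sum_comm]
    refine Finset.sum_congr rfl fun j _ => ?_
    rw [Finset.sum_eq_single (c i)]
    · by_cases h : c i = c j
      · simp [y, pinch, h]
      · simp [y, pinch, h, Ne.symm h]
    · intro b _ hb
      simp [y, hb.symm]
    · simp
  rw [hx, dotProduct_zero, Finset.sum_eq_zero_iff_of_nonneg
    (fun b _ => hA.dotProduct_mulVec_nonneg (y b))] at hq
  rw [hy, Matrix.mulVec_sum]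
  exact Finset.sum_eq_zero fun b hb => (hA.dotProduct_mulVec_zero_iff (y b)).1 (hq b hb)

/-- For positive semidefinite `A`, the pinching of the range projection of `A` equals the
range projection of the pinching of `A` if and only if the range projection of `A` is
block diagonal with respect to the partition determined by `c`. -/
theorem pinch_rangeProj_eq_iff {n k : ℕ} (c : Fin n → Fin k)
    (A : Matrix (Fin n) (Fin n) ℂ) (hA : A.PosSemidef)
    (P : Matrix (Fin n) (Fin n) ℂ) (hP : IsRangeProj A P)
    (Q : Matrix (Fin n) (Fin n) ℂ) (hQ : IsRangeProj (pinch c A) Q) :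
    pinch c P = Q ↔ pinch c P = P := by
  constructor
  · rintro rfl
    exact pinch_eq_self_of_idempotent c hP.1 hP.2.1 hQ.2.1
  · intro h
    obtain ⟨D, hD⟩ := exists_mul_of_range_le hQ.2.2.le
    obtain ⟨B, hB⟩ := exists_mul_of_range_le hP.2.2.le
    have hPQ : P * Q = Q := by
      rw [hD, ← mul_assoc, mul_pinch c h, hP.mul_eq]
    have h1 : pinch c A * (1 - Q) = 0 := by
      have := congrArg conjTranspose hQ.mul_eq
      rw [conjTranspose_mul, hQ.1.eq, (pinch_isHermitian c hA.1).eq] at this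
      rw [mul_sub, mul_one, this, sub_self]
    have h2 : A * (1 - Q) = 0 := by
      ext i j
      have h3 := mulVec_eq_zero_of_pinch c hA ((1 - Q).col j) (by
        ext l
        exact congrFun (congrFun h1 l) j)
      exact congrFun h3 i
    have h4 : P = Bᴴ * A := by
      rw [← hP.1.eq]
      conv_lhs => rw [hB]
      rw [conjTranspose_mul, hA.1.eq]
    have h5 : P * (1 - Q) = 0 := by
      rw [h4, mul_assoc, h2, mul_zero]
    rw [mul_sub, mul_one, hPQ, sub_eq_zero] at h5
    rw [h, h5]
end

section
/- Let c : Fin n → Fin k induce a partition of the index set with pinching map Φ_c, and let E ∈ M_n(ℂ) be a projection (i.e., E is Hermitian and E² = E). Then Φ_c(E) is idempotent if and only if Φ_c(E) = E. -/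
/-- For a projection matrix `E` (Hermitian and idempotent), its pinching `Φ_c(E)` is
idempotent if and only if `Φ_c(E) = E`. -/
theorem pinch_projection_idempotent_iff {n k : ℕ} (c : Fin n → Fin k)
    (E : Matrix (Fin n) (Fin n) ℂ) (hE : E.IsHermitian) (hE2 : E * E = E) :
    pinch c E * pinch c E = pinch c E ↔ pinch c E = E := by
  refine ⟨fun h => ?_, fun h => by rw [h, hE2]⟩
  have hstar : ∀ i j, E i j * E j i = ((Complex.normSq (E i j) : ℝ) : ℂ) := fun i j => by
    rw [← hE.apply j i, ← Complex.mul_conj]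
    rfl
  have key : ∀ i, ∑ j, (if c i = c j then 0 else Complex.normSq (E i j)) = 0 := by
    intro i
    have h1 : ∑ j, E i j * E j i = E i i := by
      simpa only [Matrix.mul_apply] using congrFun (congrFun hE2 i) i
    have h2 : ∑ j, (if c i = c j then E i j * E j i else 0) = E i i := by
      have h3 := congrFun (congrFun h i) i
      simp only [Matrix.mul_apply, pinch, Matrix.of_apply, if_true] at h3
      rw [← h3]
      refine Finset.sum_congr rfl fun j _ => ?_
      by_cases hc : c i = c j <;> simp [hc]
    have h4 : ∑ j, (if c i = c j then 0 else E i j * E j i) = 0 := by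
      refine Eq.trans ?_ (sub_eq_zero.2 (h1.trans h2.symm))
      rw [← Finset.sum_sub_distrib]
      refine Finset.sum_congr rfl fun j _ => ?_
      split_ifs <;> simp
    simp only [hstar] at h4
    apply Complex.ofReal_injective
    simpa only [Complex.ofReal_sum, apply_ite Complex.ofReal, Complex.ofReal_zero] using h4
  ext i j
  by_cases hc : c i = c j
  · simp [pinch, hc]
  · have hj := (Finset.sum_eq_zero_iff_of_nonneg (fun j _ => by
      split_ifs
      · exact le_rfl
      · exact Complex.normSq_nonneg _)).1 (key i) j (Finset.mem_univ j)
    rw [if_neg hc, Complex.normSq_eq_zero] at hj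
    simp [pinch, hc, hj]
end

section
/- Let H be a complex Hilbert space, let P_1, …, P_k be mutually orthogonal projections in B(H) with P_1 + ⋯ + P_k = I, and let E ∈ B(H) be a projection. Then ∑_{i=1}^k P_i E P_i is idempotent if and only if ∑_{i=1}^k P_i E P_i = E. -/
/-!
Write `S = ∑ i, P i * E * P i`. Since `P i * S = P i * E * P i = S * P i`, compressing `S * S = S`
by `P i` gives `P i * E * P i * E * P i = P i * E * P i`. With `X = E * P i - P i * E * P i`, the
off-diagonal part of the `i`-th column of `E`, this says exactly that `star X * X = 0`. The C⋆-identity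
then gives `E * P i = P i * E * P i`, and summing over `i` yields `E = S`. The converse is immediate
from `E * E = E`.
-/

/-- For mutually orthogonal projections `P 1, …, P k` summing to the identity on a
complex Hilbert space `H` and a projection `E` in `B(H)`, the operator
`∑ i, P i * E * P i` is idempotent if and only if it equals `E`. -/
theorem sum_conj_projection_idempotent_iff {H : Type*} [NormedAddCommGroup H]
    [InnerProductSpace ℂ H] [CompleteSpace H] {k : ℕ} (P : Fin k → (H →L[ℂ] H))
    (hsa : ∀ i, IsSelfAdjoint (P i)) (hidem : ∀ i, P i * P i = P i)
    (horth : ∀ i j, i ≠ j → P i * P j = 0) (hsum : ∑ i, P i = 1)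
    (E : H →L[ℂ] H) (hEsa : IsSelfAdjoint E) (hE2 : E * E = E) :
    (∑ i, P i * E * P i) * (∑ i, P i * E * P i) = (∑ i, P i * E * P i) ↔
      (∑ i, P i * E * P i) = E := by
  constructor
  · intro h
    set S := ∑ i, P i * E * P i with hS
    have hleft : ∀ i, P i * S = P i * E * P i := by
      intro i
      rw [hS, Finset.mul_sum, Finset.sum_eq_single i]
      · simp only [← mul_assoc, hidem]
      · intro j _ hj
        simp only [← mul_assoc, horth i j hj.symm, zero_mul]
      · simp
    have hright : ∀ i, S * P i = P i * E * P i := by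
      intro i
      rw [hS, Finset.sum_mul, Finset.sum_eq_single i]
      · simp only [mul_assoc, hidem]
      · intro j _ hj
        simp only [mul_assoc, horth j i hj, mul_zero]
      · simp
    have hcomp : ∀ i, P i * E * P i * E * P i = P i * E * P i := by
      intro i
      calc P i * E * P i * E * P i = P i * E * (P i * P i) * E * P i := by rw [hidem]
        _ = (P i * E * P i) * (P i * E * P i) := by simp only [mul_assoc]
        _ = (P i * S) * (S * P i) := by rw [hleft, hright]
        _ = P i * (S * S) * P i := by simp only [mul_assoc]
        _ = P i * E * P i := by rw [h, hleft, mul_assoc, hidem]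
    have hcol : ∀ i, P i * E * P i = E * P i := by
      intro i
      have hX : star (E * P i - P i * E * P i) * (E * P i - P i * E * P i) = 0 := by
        rw [star_sub, star_mul, star_mul, star_mul, (hsa i).star_eq, hEsa.star_eq]
        have h1 : P i * E * (E * P i) = P i * E * P i := by
          rw [mul_assoc, ← mul_assoc E E, hE2, mul_assoc]
        have h2 : P i * E * (P i * E * P i) = P i * E * P i := by
          simpa only [mul_assoc] using hcomp i
        have h3 : P i * (E * P i) * (E * P i) = P i * E * P i := by
          simpa only [mul_assoc] using hcomp i
        have h4 : P i * (E * P i) * (P i * E * P i) = P i * E * P i := by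
          rw [← mul_assoc (P i) E, ← mul_assoc, ← mul_assoc, mul_assoc (P i * E), hidem]
          exact hcomp i
        rw [sub_mul, mul_sub, mul_sub, h1, h2, h3, h4]
        simp
      exact (sub_eq_zero.mp (CStarRing.star_mul_self_eq_zero_iff _ |>.mp hX)).symm
    rw [hS, Finset.sum_congr rfl fun i _ => hcol i, ← Finset.mul_sum, hsum, mul_one]
  · intro h
    rw [h, hE2]
end

section
/- Let A ∈ M_n(ℂ) be positive semidefinite, let c : Fin n → Fin k induce a partition of the index set with pinching map Φ_c, and let 0 < r < 1. Then Φ_c(A^r) ≤ (Φ_c(A))^r in the Loewner order, where the r-th powers are taken via the functional calculus for positive semidefinite matrices. -/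
/-!
Averaging over random signs turns the pinching into a mixture of unitary conjugations: for
`ε : Fin k → ℤˣ` let `D_ε` be the diagonal matrix with entries `ε (c i)`. The `(i, j)` entry of
`D_ε A D_ε` is `ε (c i) ε (c j) A i j`, and the mean of `ε a ε b` over all `ε` is `1` if `a = b` and
`0` otherwise, so `Φ_c(A)` is the mean of the matrices `D_ε A D_ε` (`pinch_eq_sum`). Since the
functional calculus commutes with conjugation by the self-adjoint unitary `D_ε` (`signConj_cfc`),
the claim is Jensen's inequality for the operator concave function `t ↦ t ^ r`
(`CFC.concaveOn_rpow`).
-/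

open scoped ComplexOrder

section SignAverage

open scoped MatrixOrder Matrix.Norms.L2Operator

/-- The diagonal unitary matrix whose `i`-th diagonal entry is the sign `ε (c i)`. -/
def signUnitary {n k : ℕ} (c : Fin n → Fin k) (ε : Fin k → ℤˣ) :
    unitary (Matrix (Fin n) (Fin n) ℂ) :=
  ⟨Matrix.diagonal fun i => (((ε (c i) : ℤˣ) : ℤ) : ℂ), by
    have h : ∀ i, (((ε (c i) : ℤˣ) : ℤ) : ℂ) * (((ε (c i) : ℤˣ) : ℤ) : ℂ) = 1 := fun i => by
      rcases Int.units_eq_one_or (ε (c i)) with h | h <;> simp [h]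
    constructor <;>
      simp [Matrix.star_eq_conjTranspose, Matrix.diagonal_conjTranspose, Pi.star_def, h]⟩

/-- Conjugation `X ↦ D_ε X D_ε*` by `signUnitary c ε`, as a `⋆`-automorphism. -/
noncomputable def signConj {n k : ℕ} (c : Fin n → Fin k) (ε : Fin k → ℤˣ) :
    Matrix (Fin n) (Fin n) ℂ ≃⋆ₐ[ℂ] Matrix (Fin n) (Fin n) ℂ :=
  Unitary.conjStarAlgAut ℂ _ (signUnitary c ε)

lemma signConj_apply_apply {n k : ℕ} (c : Fin n → Fin k) (ε : Fin k → ℤˣ)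
    (X : Matrix (Fin n) (Fin n) ℂ) (i j : Fin n) :
    signConj c ε X i j = (((ε (c i) * ε (c j) : ℤˣ) : ℤ) : ℂ) * X i j := by
  simp [signConj, signUnitary, Matrix.star_eq_conjTranspose, Matrix.diagonal_conjTranspose,
    Matrix.diagonal_mul, Matrix.mul_diagonal]
  ring

/-- Orthogonality of the coordinate signs. For `a ≠ b`, flipping the sign of `ε a` negates the
sum. -/
lemma sum_sign_mul_sign {k : ℕ} (a b : Fin k) :
    ∑ ε : Fin k → ℤˣ, (((ε a * ε b : ℤˣ) : ℤ) : ℂ) =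
      if a = b then (Fintype.card (Fin k → ℤˣ) : ℂ) else 0 := by
  split_ifs with h
  · subst h
    simp [Int.units_mul_self]
  · have key : ∑ ε : Fin k → ℤˣ, (((ε a * ε b : ℤˣ) : ℤ) : ℂ) =
        -∑ ε : Fin k → ℤˣ, (((ε a * ε b : ℤˣ) : ℤ) : ℂ) := by
      rw [← Finset.sum_neg_distrib]
      refine (Equiv.sum_comp (Equiv.mulLeft (Pi.mulSingle a (-1) : Fin k → ℤˣ)) _).symm.trans ?_
      refine Finset.sum_congr rfl fun ε _ => ?_
      simp [Pi.mulSingle_eq_of_ne (Ne.symm h)]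
    exact self_eq_neg.mp key

/-- The pinching is the mean of the sign conjugations. -/
lemma pinch_eq_sum {n k : ℕ} (c : Fin n → Fin k) (X : Matrix (Fin n) (Fin n) ℂ) :
    pinch c X =
      ∑ ε : Fin k → ℤˣ, ((Fintype.card (Fin k → ℤˣ) : ℝ)⁻¹) • signConj c ε X := by
  have hN : (Fintype.card (Fin k → ℤˣ) : ℂ) ≠ 0 := Nat.cast_ne_zero.mpr Fintype.card_ne_zero
  ext i j
  rw [← Finset.smul_sum, Matrix.smul_apply, Matrix.sum_apply]
  simp_rw [signConj_apply_apply]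
  rw [← Finset.sum_mul, sum_sign_mul_sign, Complex.real_smul, pinch, Matrix.of_apply]
  push_cast only [Complex.ofReal_inv, Complex.ofReal_natCast]
  split_ifs
  · rw [inv_mul_cancel_left₀ hN]
  · simp

lemma signConj_nonneg {n k : ℕ} (c : Fin n → Fin k) (ε : Fin k → ℤˣ)
    {X : Matrix (Fin n) (Fin n) ℂ} (hX : 0 ≤ X) : 0 ≤ signConj c ε X :=
  map_nonneg (signConj c ε) hX

lemma signConj_cfc {n k : ℕ} (c : Fin n → Fin k) (ε : Fin k → ℤˣ)
    {A : Matrix (Fin n) (Fin n) ℂ} (hA : 0 ≤ A) {r : ℝ} (hr : 0 < r) :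
    signConj c ε (cfc (fun t : ℝ => t ^ r) A) = cfc (fun t : ℝ => t ^ r) (signConj c ε A) := by
  have hsa : IsSelfAdjoint A := IsSelfAdjoint.of_nonneg hA
  refine StarAlgHomClass.map_cfc (S := ℂ) (signConj c ε) _ A
    (Real.continuous_rpow_const hr.le).continuousOn ?_ hsa (hsa.map _)
  exact LinearMap.continuous_of_finiteDimensional
    ((signConj c ε).toAlgEquiv.toLinearMap)

lemma pinch_cfc_rpow_le {n k : ℕ} (c : Fin n → Fin k)
    (A : Matrix (Fin n) (Fin n) ℂ) (hA : 0 ≤ A) (r : ℝ) (hr0 : 0 < r) (hr1 : r < 1) :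
    pinch c (cfc (fun t : ℝ => t ^ r) A) ≤ cfc (fun t : ℝ => t ^ r) (pinch c A) := by
  have hpos : 0 ≤ pinch c A := by
    rw [pinch_eq_sum]
    exact Finset.sum_nonneg fun ε _ => smul_nonneg (by positivity) (signConj_nonneg c ε hA)
  have hJ := (CFC.concaveOn_rpow (A := Matrix (Fin n) (Fin n) ℂ) ⟨hr0.le, hr1.le⟩).le_map_sum
    (t := (Finset.univ : Finset (Fin k → ℤˣ)))
    (w := fun _ => (Fintype.card (Fin k → ℤˣ) : ℝ)⁻¹) (p := fun ε => signConj c ε A)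
    (fun _ _ => by positivity)
    (by
      rw [Finset.sum_const, Finset.card_univ, nsmul_eq_mul,
        mul_inv_cancel₀ (Nat.cast_ne_zero.mpr Fintype.card_ne_zero)])
    (fun ε _ => signConj_nonneg c ε hA)
  rw [← pinch_eq_sum] at hJ
  simp only [CFC.rpow_eq_cfc_real hpos, CFC.rpow_eq_cfc_real (signConj_nonneg c _ hA)] at hJ
  rw [pinch_eq_sum c (cfc _ A)]
  simpa only [signConj_cfc c _ hA hr0] using hJ

end SignAverage

/-- For a positive semidefinite matrix `A`, a pinching map `Φ_c` and `0 < r < 1`,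
`Φ_c(A ^ r) ≤ (Φ_c(A)) ^ r` in the Loewner order, where the `r`-th powers are taken via
the functional calculus (here the continuous functional calculus for matrices). -/
theorem pinch_rpow_le {n k : ℕ} (c : Fin n → Fin k)
    (A : Matrix (Fin n) (Fin n) ℂ) (hA : A.PosSemidef)
    (r : ℝ) (hr0 : 0 < r) (hr1 : r < 1) :
    (cfc (fun t : ℝ => t ^ r) (pinch c A) - pinch c (cfc (fun t : ℝ => t ^ r) A)).PosSemidef := by
  exact Matrix.le_iff.mp (pinch_cfc_rpow_le c A (Matrix.nonneg_iff_posSemidef.mpr hA) r hr0 hr1)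
end

section
/- Let V_1, …, V_m ∈ M_n(ℂ) satisfy ∑_{i=1}^m V_i* V_i = I, and define Ψ : M_n(ℂ) → M_n(ℂ) by Ψ(X) = ∑_{i=1}^m V_i* X V_i. Then for every positive semidefinite A ∈ M_n(ℂ) and every r with 0 < r < 1, one has Ψ(A^r) ≤ (Ψ(A))^r in the Loewner order, where the r-th powers are taken via the functional calculus for positive semidefinite matrices. -/
/-!
The proof takes place in an arbitrary unital C⋆-algebra, with `Ψ x = ∑ i, star (v i) * x * v i`
and `∑ i, star (v i) * v i = 1`.

For `0 < r < 1` the power function has an integral representation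
`x ^ r = ∫ t ^ r * (t⁻¹ - (t + x)⁻¹) ∂μ(t)` over `t > 0`. Since `Ψ` is linear, bounded and unital,
the claim reduces to the inequality `(t + Ψ a)⁻¹ ≤ Ψ ((t + a)⁻¹)` between resolvents, where
`t + Ψ a = Ψ (t + a)`. This is the case `b = t + a` of `(Ψ b)⁻¹ ≤ Ψ (b⁻¹)` for `b` positive and
invertible, which holds because, with `w = (Ψ b)⁻¹`, the difference `Ψ (b⁻¹) - w` equals the sum
of the positive elements `star (v i - b * v i * w) * b⁻¹ * (v i - b * v i * w)`.
-/

open Matrix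
open scoped ComplexOrder

section CStar

open Set MeasureTheory Real

variable {A : Type*} [CStarAlgebra A] [PartialOrder A] [StarOrderedRing A] {ι : Type*} [Fintype ι]

lemma units_inv_nonneg (b : Aˣ) (hb : 0 ≤ (b : A)) : (0 : A) ≤ ↑b⁻¹ := by
  have hbs : star b = b := Units.ext (IsSelfAdjoint.of_nonneg hb).star_eq
  have h := star_left_conjugate_nonneg hb (↑b⁻¹ : A)
  rwa [← Units.coe_star, star_inv, hbs, Units.inv_mul, one_mul] at h

/-- `(Ψ b)⁻¹ ≤ Ψ (b⁻¹)` for the Kraus map `Ψ x = ∑ i, star (v i) * x * v i`. The difference is a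
sum of conjugates of `b⁻¹`. -/
lemma kraus_inv_le (v : ι → A) (hv : ∑ i, star (v i) * v i = 1) (b u : Aˣ) (hb : 0 ≤ (b : A))
    (hu : ∑ i, star (v i) * (b : A) * v i = u) :
    (↑u⁻¹ : A) ≤ ∑ i, star (v i) * (↑b⁻¹ : A) * v i := by
  have hbinv : (0 : A) ≤ ↑b⁻¹ := units_inv_nonneg b hb
  have hbs : star (b : A) = b := (IsSelfAdjoint.of_nonneg hb).star_eq
  have hu0 : (0 : A) ≤ u := by
    rw [← hu]
    exact Finset.sum_nonneg fun i _ => star_left_conjugate_nonneg hb _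
  set w : A := ↑u⁻¹ with hw
  have hws : star w = w :=
    (IsSelfAdjoint.of_nonneg (units_inv_nonneg u hu0)).star_eq
  have key : ∀ i, star (v i - b * v i * w) * (↑b⁻¹ : A) * (v i - b * v i * w)
      = star (v i) * (↑b⁻¹ : A) * v i - star (v i) * v i * w - w * (star (v i) * v i)
        + w * (star (v i) * b * v i) * w := by
    intro i
    simp only [star_sub, star_mul, hbs, hws, sub_mul, mul_sub, mul_assoc,
      Units.mul_inv_cancel_left, Units.inv_mul_cancel_left]
    abel
  have hsum : 0 ≤ ∑ i, star (v i - b * v i * w) * (↑b⁻¹ : A) * (v i - b * v i * w) :=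
    Finset.sum_nonneg fun i _ => star_left_conjugate_nonneg hbinv _
  simp only [key, Finset.sum_add_distrib, Finset.sum_sub_distrib, ← Finset.sum_mul,
    ← Finset.mul_sum, hv, hu] at hsum
  rw [hw] at hsum ⊢
  simpa using hsum

lemma cfc_rpowIntegrand₀₁_eq {p t : ℝ} (hp : p ∈ Ioo 0 1) (ht : 0 < t) (x : A) (hx : 0 ≤ x) :
    cfcₙ (rpowIntegrand₀₁ p t) x =
      algebraMap ℝ A (t ^ (p - 1)) - t ^ p • Ring.inverse (algebraMap ℝ A t + x) := by
  have hspec : ∀ r ∈ spectrum ℝ x, 0 ≤ r := fun r hr => spectrum_nonneg_of_nonneg hx hr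
  have hq : quasispectrum ℝ x ⊆ Ici 0 := by grind
  rw [cfcₙ_eq_cfc (hf := (continuousOn_rpowIntegrand₀₁_Ici hp ht).mono hq)
      (hf0 := by simp), rpowIntegrand₀₁_eq_sub (by grind) ht]
  have hspectrum : ∀ r ∈ spectrum ℝ x, t + r ≠ 0 := fun r hr => by have := hspec r hr; positivity
  have hg : ContinuousOn (fun z : ℝ => (t + z)⁻¹) (spectrum ℝ x) :=
    ContinuousOn.inv₀ (by fun_prop) hspectrum
  have := cfc_sub (fun _ : ℝ => t ^ (p - 1)) (fun z : ℝ => t ^ p * (t + z)⁻¹) x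
    continuousOn_const (continuousOn_const.mul hg)
  have hx' : IsSelfAdjoint x := .of_nonneg hx
  have hid : ContinuousOn (fun z : ℝ => z) (spectrum ℝ x) := continuousOn_id
  rw [this, cfc_const _ x hx', cfc_const_mul (t ^ p) (fun z : ℝ => (t + z)⁻¹) x hg,
    cfc_inv (fun z : ℝ => t + z) x hspectrum (continuousOn_const.add hid) hx',
    cfc_const_add t (fun z : ℝ => z) x hid hx', cfc_id' ℝ x hx']

lemma isUnit_algebraMap_add {t : ℝ} (ht : 0 < t) (x : A) (hx : 0 ≤ x) :
    IsUnit (algebraMap ℝ A t + x) := by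
  have : (-t) ∉ spectrum ℝ x := fun h => by
    have := spectrum_nonneg_of_nonneg hx h
    linarith
  rw [spectrum.notMem_iff] at this
  have h2 := this.neg
  simpa [add_comm] using h2

lemma kraus_rpowIntegrand_le (v : ι → A) (hv : ∑ i, star (v i) * v i = 1) {p t : ℝ}
    (hp : p ∈ Ioo 0 1) (ht : 0 < t) (a : A) (ha : 0 ≤ a) :
    ∑ i, star (v i) * cfcₙ (rpowIntegrand₀₁ p t) a * v i
      ≤ cfcₙ (rpowIntegrand₀₁ p t) (∑ i, star (v i) * a * v i) := by
  have hΨ : 0 ≤ ∑ i, star (v i) * a * v i :=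
    Finset.sum_nonneg fun i _ => star_left_conjugate_nonneg ha _
  have hconst : ∀ c : ℝ, ∑ i, star (v i) * algebraMap ℝ A c * v i = algebraMap ℝ A c := by
    intro c
    simp only [Algebra.algebraMap_eq_smul_one, mul_smul_comm, mul_one, smul_mul_assoc,
      ← Finset.smul_sum, hv]
  rw [cfc_rpowIntegrand₀₁_eq hp ht a ha, cfc_rpowIntegrand₀₁_eq hp ht _ hΨ]
  simp only [mul_sub, sub_mul, Finset.sum_sub_distrib, hconst, mul_smul_comm, smul_mul_assoc,
    ← Finset.smul_sum]
  obtain ⟨b, hb⟩ := isUnit_algebraMap_add ht a ha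
  obtain ⟨u, hu⟩ := isUnit_algebraMap_add ht _ hΨ
  rw [← hb, ← hu, Ring.inverse_unit, Ring.inverse_unit]
  have hb0 : 0 ≤ (b : A) := by
    rw [hb]
    exact add_nonneg (algebraMap_nonneg A ht.le) ha
  have := kraus_inv_le v hv b u hb0 (by
    rw [hb, hu]
    simp only [mul_add, add_mul, Finset.sum_add_distrib, hconst])
  gcongr

/-- Integrating the resolvent inequality: operator Jensen inequality for `t ↦ t ^ r` in a
C⋆-algebra. -/
lemma kraus_cfc_rpow_le (v : ι → A) (hv : ∑ i, star (v i) * v i = 1) (a : A) (ha : 0 ≤ a)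
    (r : ℝ) (hr0 : 0 < r) (hr1 : r < 1) :
    ∑ i, star (v i) * cfc (fun t : ℝ => t ^ r) a * v i
      ≤ cfc (fun t : ℝ => t ^ r) (∑ i, star (v i) * a * v i) := by
  have hΨ : 0 ≤ ∑ i, star (v i) * a * v i :=
    Finset.sum_nonneg fun i _ => star_left_conjugate_nonneg ha _
  lift r to NNReal using hr0.le
  obtain ⟨μ, hμ⟩ := CFC.exists_measure_nnrpow_eq_integral_cfcₙ_rpowIntegrand₀₁ A (p := r)
    ⟨by exact_mod_cast hr0, by exact_mod_cast hr1⟩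
  rw [← CFC.rpow_eq_cfc_real ha, ← CFC.rpow_eq_cfc_real hΨ,
    ← CFC.nnrpow_eq_rpow (by exact_mod_cast hr0), ← CFC.nnrpow_eq_rpow (by exact_mod_cast hr0),
    (hμ a ha).2, (hμ _ hΨ).2]
  let Ψ : A →L[ℝ] A := ∑ i,
    (ContinuousLinearMap.mul ℝ A).flip (v i) ∘L ContinuousLinearMap.mul ℝ A (star (v i))
  have hΨa : ∀ x, Ψ x = ∑ i, star (v i) * x * v i := fun x => by simp [Ψ]
  rw [← hΨa (∫ t in Ioi 0, cfcₙ (rpowIntegrand₀₁ r t) a ∂μ),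
    ← Ψ.integral_comp_comm (hμ a ha).1]
  refine integral_mono_ae (Ψ.integrable_comp (hμ a ha).1) (hμ _ hΨ).1 ?_
  filter_upwards [ae_restrict_mem measurableSet_Ioi] with t ht
  rw [hΨa]
  exact kraus_rpowIntegrand_le v hv ⟨hr0, hr1⟩ ht a ha

end CStar

open scoped MatrixOrder Matrix.Norms.L2Operator in
/-- The matrix case, with `Mₙ(ℂ)` a C⋆-algebra under the L² operator norm. -/
lemma kraus_cfc_rpow_le_matrix {n m : ℕ} (V : Fin m → Matrix (Fin n) (Fin n) ℂ)
    (hV : ∑ i, (V i)ᴴ * V i = 1)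
    (A : Matrix (Fin n) (Fin n) ℂ) (hA : A.PosSemidef)
    (r : ℝ) (hr0 : 0 < r) (hr1 : r < 1) :
    (cfc (fun t : ℝ => t ^ r) (∑ i, (V i)ᴴ * A * V i) -
      ∑ i, (V i)ᴴ * (cfc (fun t : ℝ => t ^ r) A) * V i).PosSemidef :=
  Matrix.le_iff.mp (kraus_cfc_rpow_le V hV A hA.nonneg r hr0 hr1)

/-- Jensen-type operator inequality for the power functions `t ↦ t ^ r`, `0 < r < 1`, and
a unital completely positive map `Ψ` on `Mₙ(ℂ)` given in Kraus form
`Ψ(X) = ∑ i, (V i)ᴴ * X * V i` with `∑ i, (V i)ᴴ * V i = 1`: for positive semidefinite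
`A`, `Ψ(A ^ r) ≤ (Ψ(A)) ^ r` in the Loewner order, powers via functional calculus. -/
theorem kraus_rpow_le {n m : ℕ} (V : Fin m → Matrix (Fin n) (Fin n) ℂ)
    (hV : ∑ i, (V i)ᴴ * V i = 1)
    (A : Matrix (Fin n) (Fin n) ℂ) (hA : A.PosSemidef)
    (r : ℝ) (hr0 : 0 < r) (hr1 : r < 1) :
    (cfc (fun t : ℝ => t ^ r) (∑ i, (V i)ᴴ * A * V i) -
      ∑ i, (V i)ᴴ * (cfc (fun t : ℝ => t ^ r) A) * V i).PosSemidef := by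
  exact kraus_cfc_rpow_le_matrix V hV A hA r hr0 hr1
end

section
/- Let A ∈ M_n(ℂ) be positive semidefinite, and let α_1, …, α_k be a partition of {1, …, n} into disjoint nonempty index sets. Then rank(A) ≤ ∑_{i=1}^k rank(A[α_i]), where A[α_i] denotes the principal submatrix of A with rows and columns indexed by α_i. -/
open scoped ComplexOrder

/-!
A positive semidefinite `A` is a Gram matrix `Bᴴ * B`, so `rank A = rank B`. With `B[α]` the
matrix of those columns of `B` indexed by `α`, likewise `A[α] = B[α]ᴴ * B[α]` and
`rank A[α] = rank B[α]`. Since the `α i` cover the index set, the column space of `B` is contained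
in the sum of the column spaces of the `B[α i]`, and dimension is subadditive over sums of
subspaces.
-/

theorem finrank_finset_sup_le_sum {K V ι : Type*} [Field K] [AddCommGroup V] [Module K V]
    [FiniteDimensional K V] (s : Finset ι) (W : ι → Submodule K V) :
    Module.finrank K (s.sup W : Submodule K V) ≤ ∑ i ∈ s, Module.finrank K (W i) := by
  classical
  induction s using Finset.induction_on with
  | empty => simp
  | insert a s ha ih =>
    rw [Finset.sup_insert, Finset.sum_insert ha]
    exact (Submodule.finrank_add_le_finrank_add_finrank _ _).trans (Nat.add_le_add_left ih _)

/-- Lundquist–Barrett rank inequality: for a positive semidefinite matrix `A ∈ Mₙ(ℂ)`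
and a partition of the index set into disjoint nonempty sets `α 1, …, α k`, the rank of
`A` is at most the sum of the ranks of the principal submatrices `A[α i]`. -/
theorem rank_le_sum_rank_submatrix {n k : ℕ} (A : Matrix (Fin n) (Fin n) ℂ)
    (hA : A.PosSemidef) (α : Fin k → Finset (Fin n))
    (hne : ∀ i, (α i).Nonempty)
    (hdisj : ∀ i j, i ≠ j → Disjoint (α i) (α j))
    (hcover : ∀ x, ∃ i, x ∈ α i) :
    A.rank ≤ ∑ i, (A.submatrix (fun x : α i => (x : Fin n)) (fun x : α i => (x : Fin n))).rank := by
  obtain ⟨B, rfl⟩ : ∃ B : Matrix (Fin n) (Fin n) ℂ, A = B.conjTranspose * B := by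
    open scoped MatrixOrder in
    exact CStarAlgebra.nonneg_iff_eq_star_mul_self.mp hA.nonneg
  have hsub : ∀ i, ((B.conjTranspose * B).submatrix (fun x : α i => (x : Fin n))
      (fun x : α i => (x : Fin n))).rank
      = (B.submatrix id (fun x : α i => (x : Fin n))).rank := fun i =>
    Matrix.rank_conjTranspose_mul_self (B.submatrix id (fun x : α i => (x : Fin n)))
  rw [Matrix.rank_conjTranspose_mul_self]
  simp only [hsub, Matrix.rank_eq_finrank_span_cols]
  refine (Submodule.finrank_mono ?_).trans (finrank_finset_sup_le_sum Finset.univ _)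
  rw [Submodule.span_le]
  rintro _ ⟨x, rfl⟩
  obtain ⟨i, hi⟩ := hcover x
  exact Finset.le_sup (f := fun i => Submodule.span ℂ
    (Set.range (B.submatrix id (fun x : α i => (x : Fin n))).col)) (Finset.mem_univ i)
    (Submodule.subset_span ⟨⟨x, hi⟩, rfl⟩)
end

section
/- Let A ∈ M_n(ℂ) be positive semidefinite, and let α_1, …, α_k be a partition of {1, …, n} into disjoint nonempty index sets. Then rank(A) = ∑_{i=1}^k rank(A[α_i]) if and only if the range projection P_A of A is block diagonal with respect to this partition, i.e., P_A[α_ℓ, α_m] = 0 for all ℓ ≠ m, where P_A[α_ℓ, α_m] is the submatrix of P_A with rows indexed by α_ℓ and columns indexed by α_m. -/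
/-!
The rank of `A[α i]` only depends on the range of `A`: writing `A = Bᴴ B` and letting `E` be the
coordinate inclusion, `rank (Eᴴ A E) = rank (A E)`, and Hermitian matrices with the same range
have the same kernel (`rank_submatrix_eq_of_range_eq`). Hence `A` may be replaced by its range
projection `P`, for which `rank P = tr P = ∑ tr P[α i]`.

Each `Q = P[α i]` satisfies `Q - Q² = C Cᴴ ≥ 0` with `C = P[α i, (α i)ᶜ]` (`submatrix_sub_sq`), so
its eigenvalues lie in `[0, 1]` and `tr Q ≤ rank Q`, with equality iff `tr (Q - Q²) = tr (C Cᴴ)`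
vanishes, i.e. iff `C = 0` (`trace_re_le_rank_and_eq_iff`). Summing over `i`, the rank identity
holds iff all these off-diagonal blocks are zero.
-/

open scoped ComplexOrder

open Matrix

/-- For a Hermitian matrix with `Q² ≤ Q`, all eigenvalues lie in `[0, 1]`, so the trace (the sum of
the eigenvalues) is at most the rank (the number of nonzero ones), with equality exactly when every
eigenvalue is `0` or `1`; the latter is expressed as the vanishing of `tr (Q - Q²) = ∑ λ(1 - λ)`. -/
lemma trace_re_le_rank_and_eq_iff {ι : Type*} [Fintype ι] [DecidableEq ι] {Q : Matrix ι ι ℂ}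
    (hQ : Q.IsHermitian) (h : (Q - Q * Q).PosSemidef) :
    Q.trace.re ≤ Q.rank ∧ (Q.trace.re = Q.rank ↔ (Q - Q * Q).trace = 0) := by
  set U := hQ.eigenvectorUnitary
  set ev := hQ.eigenvalues with hev
  have hU : star (U : Matrix ι ι ℂ) * (U : Matrix ι ι ℂ) = 1 := Unitary.coe_star_mul_self U
  have hspec : Q = (U : Matrix ι ι ℂ) * diagonal (fun i => (ev i : ℂ)) *
      star (U : Matrix ι ι ℂ) := by
    have := hQ.spectral_theorem
    rw [Unitary.conjStarAlgAut_apply] at this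
    exact this
  have hdiff : Q - Q * Q = (U : Matrix ι ι ℂ) *
      diagonal (fun i => ((ev i - ev i * ev i : ℝ) : ℂ)) * star (U : Matrix ι ι ℂ) := by
    have hd : diagonal (fun i => ((ev i - ev i * ev i : ℝ) : ℂ)) =
        diagonal (fun i => (ev i : ℂ)) -
          diagonal (fun i => (ev i : ℂ)) * diagonal (fun i => (ev i : ℂ)) := by
      rw [diagonal_mul_diagonal, diagonal_sub]
      simp
    have hsq : Q * Q = (U : Matrix ι ι ℂ) * (diagonal (fun i => (ev i : ℂ)) *
        diagonal (fun i => (ev i : ℂ))) * star (U : Matrix ι ι ℂ) := by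
      conv_lhs => rw [hspec]
      generalize diagonal (fun i => (ev i : ℂ)) = D
      calc (U : Matrix ι ι ℂ) * D * star (U : Matrix ι ι ℂ) *
            ((U : Matrix ι ι ℂ) * D * star (U : Matrix ι ι ℂ))
          = (U : Matrix ι ι ℂ) * D * (star (U : Matrix ι ι ℂ) * (U : Matrix ι ι ℂ)) * D *
              star (U : Matrix ι ι ℂ) := by simp only [Matrix.mul_assoc]
        _ = _ := by rw [hU]; simp only [Matrix.mul_assoc, Matrix.one_mul]
    rw [hd, hsq, Matrix.mul_sub, Matrix.sub_mul, ← hspec]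
  have hdiag : diagonal (fun i => ((ev i - ev i * ev i : ℝ) : ℂ)) =
      (U : Matrix ι ι ℂ)ᴴ * (Q - Q * Q) * (U : Matrix ι ι ℂ) := by
    rw [hdiff, ← star_eq_conjTranspose]
    generalize diagonal (fun i => ((ev i - ev i * ev i : ℝ) : ℂ)) = D
    calc D = (star (U : Matrix ι ι ℂ) * (U : Matrix ι ι ℂ)) * D *
          (star (U : Matrix ι ι ℂ) * (U : Matrix ι ι ℂ)) := by rw [hU]; simp
      _ = _ := by simp only [Matrix.mul_assoc]
  have hnn : ∀ i, 0 ≤ ev i - ev i * ev i := by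
    have := h.conjTranspose_mul_mul_same (U : Matrix ι ι ℂ)
    rw [← hdiag, posSemidef_diagonal_iff] at this
    intro i
    exact_mod_cast this i
  have htrd : (Q - Q * Q).trace = ((∑ i, (ev i - ev i * ev i) : ℝ) : ℂ) := by
    rw [hdiff, trace_mul_comm, ← Matrix.mul_assoc, hU, Matrix.one_mul, trace_diagonal]
    push_cast
    rfl
  have htr : Q.trace.re = ∑ i, ev i := by
    rw [hQ.trace_eq_sum_eigenvalues]
    simp [hev]
  have hrank : (Q.rank : ℝ) = ∑ i, (if ev i ≠ 0 then (1 : ℝ) else 0) := by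
    rw [hQ.rank_eq_card_non_zero_eigs, Fintype.card_subtype, Finset.sum_boole]
  have hle : ∀ i ∈ Finset.univ, ev i ≤ (if ev i ≠ 0 then (1 : ℝ) else 0) := by
    intro i _
    have := hnn i
    split_ifs with h0
    · nlinarith
    · exact (not_not.1 h0).le
  rw [htr, hrank]
  refine ⟨Finset.sum_le_sum hle, ?_⟩
  rw [Finset.sum_eq_sum_iff_of_le hle, htrd, Complex.ofReal_eq_zero,
    Finset.sum_eq_zero_iff_of_nonneg (fun i _ => hnn i)]
  refine forall₂_congr fun i _ => ?_
  split_ifs with h0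
  · constructor
    · intro h1
      rw [h1]; norm_num
    · intro h1
      have : ev i * (1 - ev i) = 0 := by linarith
      rcases mul_eq_zero.1 this with h2 | h2
      · exact absurd h2 h0
      · linarith
  · have h1 : ev i = 0 := not_not.1 h0
    rw [h1]; norm_num

open scoped MatrixOrder in
/-- Factoring `A = Bᴴ B`, both `A E` and `Eᴴ A E = (B E)ᴴ (B E)` have the rank of `B E`. -/
lemma rank_compression_eq {ι κ : Type*} [Fintype ι] [DecidableEq ι] [Fintype κ]
    {A : Matrix ι ι ℂ} (hA : A.PosSemidef) (E : Matrix ι κ ℂ) :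
    (Eᴴ * A * E).rank = (A * E).rank := by
  obtain ⟨B, hB⟩ := CStarAlgebra.nonneg_iff_eq_star_mul_self.mp hA.nonneg
  rw [star_eq_conjTranspose] at hB
  subst hB
  apply le_antisymm
  · rw [Matrix.mul_assoc]
    exact rank_mul_le_right _ _
  · calc (Bᴴ * B * E).rank = (Bᴴ * (B * E)).rank := by rw [Matrix.mul_assoc]
      _ ≤ (B * E).rank := rank_mul_le_right _ _
      _ = ((B * E)ᴴ * (B * E)).rank := (rank_conjTranspose_mul_self _).symm
      _ = (Eᴴ * (Bᴴ * B) * E).rank := by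
        rw [conjTranspose_mul]; simp only [Matrix.mul_assoc]

lemma exists_eq_mul_of_range_le {ι : Type*} [Fintype ι] [DecidableEq ι] {M N : Matrix ι ι ℂ}
    (h : LinearMap.range M.mulVecLin ≤ LinearMap.range N.mulVecLin) :
    ∃ X : Matrix ι ι ℂ, M = N * X := by
  have h1 : ∀ j, ∃ v, N *ᵥ v = M.col j := fun j => by
    have : M.col j ∈ LinearMap.range M.mulVecLin :=
      ⟨Pi.single j 1, by rw [mulVecLin_apply, mulVec_single_one]⟩
    exact h this
  choose v hv using h1
  refine ⟨Matrix.of fun i j => v j i, ?_⟩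
  ext i j
  exact (congrFun (hv j) i).symm

/-- Hermitian matrices with nested ranges have oppositely nested kernels, which gives this rank
inequality. -/
lemma rank_mul_le_of_range_le {ι κ : Type*} [Fintype ι] [DecidableEq ι] [Fintype κ]
    {M N : Matrix ι ι ℂ} (hM : M.IsHermitian) (hN : N.IsHermitian)
    (h : LinearMap.range M.mulVecLin ≤ LinearMap.range N.mulVecLin) (E : Matrix ι κ ℂ) :
    (M * E).rank ≤ (N * E).rank := by
  obtain ⟨X, hX⟩ := exists_eq_mul_of_range_le h
  have : M = Xᴴ * N := by
    rw [← hM.eq, hX, conjTranspose_mul, hN.eq]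
  rw [this, Matrix.mul_assoc]
  exact rank_mul_le_right _ _

/-- Positive semidefinite matrices with the same range have principal submatrices of equal rank. -/
lemma rank_submatrix_eq_of_range_eq {ι κ : Type*} [Fintype ι] [DecidableEq ι] [Fintype κ]
    {A P : Matrix ι ι ℂ} (hA : A.PosSemidef) (hP : P.PosSemidef)
    (h : LinearMap.range P.mulVecLin = LinearMap.range A.mulVecLin) (f : κ → ι) :
    (A.submatrix f f).rank = (P.submatrix f f).rank := by
  -- `E` is the coordinate inclusion, so `Eᴴ M E` is the principal submatrix of `M` along `f`.
  set E : Matrix ι κ ℂ := (1 : Matrix ι ι ℂ).submatrix id f with hE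
  have key : ∀ M : Matrix ι ι ℂ, M.submatrix f f = Eᴴ * M * E := by
    intro M
    ext a b
    simp [hE, Matrix.mul_apply, Matrix.one_apply]
  rw [key, key, rank_compression_eq hA, rank_compression_eq hP]
  exact le_antisymm (rank_mul_le_of_range_le hA.1 hP.1 h.ge E)
    (rank_mul_le_of_range_le hP.1 hA.1 h.le E)

/-- For a projection `P`, the defect `P[s] - P[s]²` of a principal submatrix is `C Cᴴ`, where
`C = P[s, sᶜ]`. -/
lemma submatrix_sub_sq {ι : Type*} [Fintype ι] [DecidableEq ι] {P : Matrix ι ι ℂ}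
    (hP : P.IsHermitian) (hPP : P * P = P) (s : Finset ι) :
    P.submatrix (fun x : s => (x : ι)) (fun x : s => (x : ι)) -
        P.submatrix (fun x : s => (x : ι)) (fun x : s => (x : ι)) *
          P.submatrix (fun x : s => (x : ι)) (fun x : s => (x : ι)) =
      P.submatrix (fun x : s => (x : ι)) (fun x : {x // x ∉ s} => (x : ι)) *
        (P.submatrix (fun x : s => (x : ι)) (fun x : {x // x ∉ s} => (x : ι)))ᴴ := by
  rw [sub_eq_iff_eq_add]
  ext a b
  have h1 : P a b = ∑ c, P a c * P c b := by
    conv_lhs => rw [← hPP]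
    rfl
  have h2 := Fintype.sum_subtype_add_sum_subtype (fun x => x ∈ s) (fun c => P a c * P c b)
  simp only [Matrix.add_apply, Matrix.mul_apply, submatrix_apply, conjTranspose_apply]
  rw [h1, ← h2, add_comm]
  congr 1
  · refine Finset.sum_congr rfl fun c _ => ?_
    rw [hP.apply]
  · exact Finset.sum_congr (by ext; simp) fun _ _ => rfl

/-- For a positive semidefinite `A ∈ Mₙ(ℂ)` and a partition of the index set into
disjoint nonempty sets `α 1, …, α k`, the rank of `A` equals the sum of the ranks of the
principal submatrices `A[α i]` if and only if the range projection of `A` is block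
diagonal with respect to the partition, i.e. all the off-diagonal blocks
`P_A[α l, α m]` (`l ≠ m`) vanish. -/
theorem rank_eq_sum_rank_submatrix_iff {n k : ℕ} (A : Matrix (Fin n) (Fin n) ℂ)
    (hA : A.PosSemidef) (α : Fin k → Finset (Fin n))
    (hne : ∀ i, (α i).Nonempty)
    (hdisj : ∀ i j, i ≠ j → Disjoint (α i) (α j))
    (hcover : ∀ x, ∃ i, x ∈ α i)
    (P : Matrix (Fin n) (Fin n) ℂ) (hP : IsRangeProj A P) :
    A.rank = ∑ i, (A.submatrix (fun x : α i => (x : Fin n)) (fun x : α i => (x : Fin n))).rank ↔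
      ∀ l m, l ≠ m → ∀ i ∈ α l, ∀ j ∈ α m, P i j = 0 := by
  obtain ⟨hPH, hPP, hrange⟩ := hP
  have hPpsd : P.PosSemidef := by
    have := posSemidef_self_mul_conjTranspose P
    rwa [hPH.eq, hPP] at this
  have hrankA : A.rank = P.rank := by
    rw [Matrix.rank, Matrix.rank, hrange]
  have hrankP : P.trace.re = P.rank :=
    (trace_re_le_rank_and_eq_iff hPH (by rw [hPP, sub_self]; exact PosSemidef.zero)).2.2
      (by rw [hPP, sub_self, trace_zero])
  have htrace : P.trace.re = ∑ i, (P.submatrix (fun x : α i => (x : Fin n))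
      (fun x : α i => (x : Fin n))).trace.re := by
    have hU : (Finset.univ : Finset (Fin n)) = Finset.univ.biUnion α := by
      ext x
      simpa using hcover x
    rw [Matrix.trace, hU, Finset.sum_biUnion (fun i _ j _ hij => hdisj i j hij), Complex.re_sum]
    refine Finset.sum_congr rfl fun i _ => ?_
    rw [Matrix.trace, ← Finset.sum_coe_sort]
    rfl
  have hblock : ∀ i, _ := fun i => trace_re_le_rank_and_eq_iff
    (hPH.submatrix (fun x : α i => (x : Fin n)))
    (by rw [submatrix_sub_sq hPH hPP]; exact posSemidef_self_mul_conjTranspose _)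
  simp_rw [rank_submatrix_eq_of_range_eq hA hPpsd hrange]
  rw [hrankA, ← Nat.cast_inj (R := ℝ), ← hrankP, htrace, Nat.cast_sum,
    Finset.sum_eq_sum_iff_of_le (fun i _ => (hblock i).1)]
  simp only [Finset.mem_univ, true_imp_iff, fun i => (hblock i).2]
  simp only [submatrix_sub_sq hPH hPP, trace_mul_conjTranspose_self_eq_zero_iff]
  constructor
  · intro h l m hlm i hi j hj
    have hj' : j ∉ α l := fun hl => Finset.disjoint_left.1 (hdisj l m hlm) hl hj
    exact congrFun (congrFun (h l) ⟨i, hi⟩) ⟨j, hj'⟩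
  · intro h l
    ext ⟨i, hi⟩ ⟨j, hj⟩
    obtain ⟨m, hm⟩ := hcover j
    exact h l m (by rintro rfl; exact hj hm) i hi j hm
end

section
/- Let A ∈ M_n(ℂ) be positive semidefinite and let α ⊆ {1, …, n} be a nonempty proper index set with complement α^c. Then rank(A) ≤ rank(A[α]) + rank(A[α^c]). -/
open scoped ComplexOrder

/-! Write `A = Bᴴ * B`. Then `A[α]` is the Gram matrix of the columns of `B` indexed by `α`, so
its rank is the dimension of the span of those columns, and likewise for the complement. The
column space of `B` is the sum of these two spans, and dimension is subadditive. -/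

/-- Lundquist–Barrett rank inequality for two complementary index sets: for a positive
semidefinite matrix `A ∈ Mₙ(ℂ)` and a nonempty proper index set `α`,
`rank A ≤ rank A[α] + rank A[αᶜ]`. -/
theorem rank_le_rank_submatrix_add_rank_submatrix_compl {n : ℕ}
    (A : Matrix (Fin n) (Fin n) ℂ) (hA : A.PosSemidef)
    (α : Finset (Fin n)) (hne : α.Nonempty) (hproper : α ≠ Finset.univ) :
    A.rank ≤ (A.submatrix (fun x : α => (x : Fin n)) (fun x : α => (x : Fin n))).rank +
      (A.submatrix (fun x : (αᶜ : Finset (Fin n)) => (x : Fin n))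
        (fun x : (αᶜ : Finset (Fin n)) => (x : Fin n))).rank := by
  obtain ⟨B, rfl⟩ : ∃ B : Matrix (Fin n) (Fin n) ℂ, A = B.conjTranspose * B := by
    open scoped MatrixOrder in
    exact CStarAlgebra.nonneg_iff_eq_star_mul_self.mp hA.nonneg
  have gram (s : Finset (Fin n)) :
      ((B.conjTranspose * B).submatrix (fun x : s => (x : Fin n)) (fun x : s => (x : Fin n))).rank
        = (B.submatrix id (fun x : s => (x : Fin n))).rank :=
    Matrix.rank_conjTranspose_mul_self (B.submatrix id (fun x : s => (x : Fin n)))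
  rw [gram, gram, Matrix.rank_conjTranspose_mul_self]
  simp only [Matrix.rank_eq_finrank_span_cols]
  refine (Submodule.finrank_mono ?_).trans (Submodule.finrank_add_le_finrank_add_finrank _ _)
  rw [Submodule.span_le]
  rintro _ ⟨j, rfl⟩
  by_cases hj : j ∈ α
  · exact Submodule.mem_sup_left (Submodule.subset_span ⟨⟨j, hj⟩, rfl⟩)
  · exact Submodule.mem_sup_right
      (Submodule.subset_span ⟨⟨j, Finset.mem_compl.mpr hj⟩, rfl⟩)
end

section
/- Let A ∈ M_n(ℂ) be positive semidefinite, let c : Fin n → Fin k induce a partition of the index set with pinching map Φ_c, and suppose the range projection P_A of A satisfies Φ_c(P_A) = P_A (i.e., P_A is block diagonal with respect to the partition determined by c). Then the column space of Φ_c(A) is contained in the column space of A; equivalently, P_A · Φ_c(A) = Φ_c(A). -/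
/-!
The columns of `A` lie in the range of the idempotent `P`, so `P * A = A`. Since `P` is block
diagonal, left multiplication by `P` commutes with pinching (`pinch_mul_of_pinch_eq`), hence
`P * pinch c A = pinch c (P * A) = pinch c A`. The inclusion of column spaces follows because
`P` and `A` have the same range.
-/

open scoped ComplexOrder

/-- The pinching map is a left module map over the block-diagonal matrices. -/
lemma pinch_mul_of_pinch_eq {n k : ℕ} (c : Fin n → Fin k)
    (P A : Matrix (Fin n) (Fin n) ℂ) (hfix : pinch c P = P) :
    pinch c (P * A) = P * pinch c A := by
  have hP : ∀ i j, c i ≠ c j → P i j = 0 := fun i j h => by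
    rw [← hfix]
    simp [pinch, h]
  ext i j
  simp only [pinch, Matrix.of_apply, Matrix.mul_apply]
  by_cases hij : c i = c j
  · rw [if_pos hij]
    refine Finset.sum_congr rfl fun l _ => ?_
    by_cases hl : c i = c l
    · rw [if_pos (hl.symm.trans hij)]
    · rw [hP i l hl, zero_mul, zero_mul]
  · rw [if_neg hij]
    refine (Finset.sum_eq_zero fun l _ => ?_).symm
    by_cases hl : c i = c l
    · rw [if_neg fun h => hij (hl.trans h), mul_zero]
    · rw [hP i l hl, zero_mul]

/-- If the range projection `P` of a positive semidefinite matrix `A` is block diagonal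
with respect to the partition determined by `c` (i.e. `Φ_c(P) = P`), then the column
space of `Φ_c(A)` is contained in the column space of `A`; equivalently,
`P * Φ_c(A) = Φ_c(A)`. -/
theorem rangeProj_mul_pinch {n k : ℕ} (c : Fin n → Fin k)
    (A : Matrix (Fin n) (Fin n) ℂ) (hA : A.PosSemidef)
    (P : Matrix (Fin n) (Fin n) ℂ) (hP : IsRangeProj A P)
    (hfix : pinch c P = P) :
    LinearMap.range (pinch c A).mulVecLin ≤ LinearMap.range A.mulVecLin ∧
      P * pinch c A = pinch c A := by
  have hPA : P * A = A := by
    obtain ⟨-, hidem, hrange⟩ := hP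
    refine Matrix.ext_of_mulVec_single fun j => ?_
    obtain ⟨w, hw⟩ : A.mulVec (Pi.single j 1) ∈ LinearMap.range P.mulVecLin :=
      hrange ▸ ⟨Pi.single j 1, rfl⟩
    rw [Matrix.mulVecLin_apply] at hw
    rw [← Matrix.mulVec_mulVec, ← hw, Matrix.mulVec_mulVec, hidem]
  have hmul : P * pinch c A = pinch c A := by
    rw [← pinch_mul_of_pinch_eq c P A hfix, hPA]
  refine ⟨?_, hmul⟩
  rw [← hP.2.2, ← hmul, Matrix.mulVecLin_mul]
  exact LinearMap.range_comp_le_range _ _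
end
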